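/- Let X be a pospace. Two dipaths f, g in X are reparametrization equivalent if and only if they have the same image, f([0,1]) = g([0,1]). -/

import Mathlib

open unitInterval

noncomputable section

/-- A reparametrization of the unit interval: continuous, monotone, fixing the endpoints. -/
def IsReparam (φ : unitInterval → unitInterval) : Prop :=
  Continuous φ ∧ Monotone φ ∧ φ 0 = 0 ∧ φ 1 = 1

/-- Reparametrization equivalence of paths. -/
def ReparamEquiv {X : Type*} (f g : unitInterval → X) : Prop :=
  ∃ φ ψ : unitInterval → unitInterval, IsReparam φ ∧ IsReparam ψ ∧ f ∘ φ = g ∘ ψ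

/-- A dipath in a pospace: a continuous monotone map `[0,1] → X`. -/
def IsDipath {X : Type*} [TopologicalSpace X] [Preorder X] (p : unitInterval → X) : Prop :=
  Continuous p ∧ Monotone p

/-!
Fibres of a dipath in a T₁ space are closed order-intervals, so the image `C` of a dipath `f` is a
densely ordered chain. Monotone surjections onto `C` are continuous for its order topology; this
applies to `f` and to any monotone `g` with the same image. As `s` grows along the antidiagonal
`s + t = u` of the square, `f s` increases and `g t` decreases, so there is a first `s = m u` with
`g (u - s) ≤ f s`, and there the two values agree. Raising `u` shrinks the set of such `s`, while
translating it by the increment of `u` keeps it inside the new one; hence `m u` and `u - m u` are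
both nondecreasing, and therefore continuous. Rescaled from `[0, 2]` to `[0, 1]`, they are the two
reparametrizations.
-/

open Function Set

theorem IsReparam.surjective {φ : I → I} (hφ : IsReparam φ) : Surjective φ := by
  obtain ⟨hcont, -, h0, h1⟩ := hφ
  intro y
  have hy : y ∈ Icc (φ 0) (φ 1) := by
    rw [h0, h1]
    exact ⟨nonneg', le_one'⟩
  exact intermediate_value_univ 0 1 hcont hy

theorem isReparam_projIcc_comp_two_mul {k : ℝ → ℝ} (hmono : Monotone k) (hcont : Continuous k)
    (h0 : k 0 = 0) (h2 : k 2 = 1) :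
    IsReparam fun v : I => projIcc 0 1 zero_le_one (k (2 * v)) := by
  refine ⟨by fun_prop, fun v w hvw => ?_, ?_, ?_⟩
  · have hvw' : (v : ℝ) ≤ w := hvw
    exact monotone_projIcc _ (hmono (by linarith))
  · simp [h0]
  · simp [h2]

namespace ReparamEquiv

variable {X Y : Type*} {f g : I → X}

theorem range_eq (h : ReparamEquiv f g) : range f = range g := by
  obtain ⟨φ, ψ, hφ, hψ, hfg⟩ := h
  rw [← hφ.surjective.range_comp f, hfg, hψ.surjective.range_comp g]

theorem comp_left (h : ReparamEquiv f g) (q : X → Y) : ReparamEquiv (q ∘ f) (q ∘ g) := by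
  obtain ⟨φ, ψ, hφ, hψ, hfg⟩ := h
  exact ⟨φ, ψ, hφ, hψ, by rw [comp_assoc, hfg, comp_assoc]⟩

end ReparamEquiv

theorem continuous_of_monotone_of_monotone_sub {k : ℝ → ℝ} (hk : Monotone k)
    (hsub : Monotone fun u => u - k u) : Continuous k := by
  refine (LipschitzWith.of_le_add fun u w => ?_).continuous
  rw [Real.dist_eq]
  rcases le_total u w with huw | hwu
  · linarith [hk huw, abs_nonneg (u - w)]
  · linarith [hsub hwu, le_abs_self (u - w)]

theorem denselyOrdered_of_surjective_of_isClosed_fiber {α C : Type*} [LinearOrder α]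
    [TopologicalSpace α] [OrderClosedTopology α] [CompactSpace α] [DenselyOrdered α]
    [PartialOrder C] {f : α → C} (hf : Monotone f) (hsurj : Surjective f)
    (hfiber : ∀ c, IsClosed (f ⁻¹' {c})) : DenselyOrdered C where
  dense x y hxy := by
    obtain ⟨a, rfl, ha⟩ := (hfiber x).isCompact.exists_isGreatest (hsurj x)
    obtain ⟨b, rfl, hb⟩ := (hfiber y).isCompact.exists_isLeast (hsurj y)
    obtain ⟨r, har, hrb⟩ := exists_between (hf.reflect_lt hxy)
    exact ⟨f r, (hf har.le).lt_of_ne fun h => har.not_ge (ha h.symm),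
      (hf hrb.le).lt_of_ne fun h => hrb.not_ge (hb h)⟩

section Crossing

section LE

variable {C : Type*} [LE C]

/-- The parameters `s` at which the antidiagonal `s + t = u` has reached `G t ≤ F s`. The bound
`max 0 (u - 1) ≤ s` says that `0 ≤ s` and `t ≤ 1`; there is no upper bound on `s`, so that the set
is stable under increasing `s` and `u` by the same amount. -/
def crossingSet (F G : ℝ → C) (u : ℝ) : Set ℝ :=
  {s | max 0 (u - 1) ≤ s ∧ G (u - s) ≤ F s}

/-- The first parameter at which the antidiagonal `s + t = u` reaches `G t ≤ F s`. As an
infimum of reals it has the junk value `0` when `crossingSet F G u` is empty. -/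
def firstCrossing (F G : ℝ → C) (u : ℝ) : ℝ :=
  sInf (crossingSet F G u)

theorem bddBelow_crossingSet (F G : ℝ → C) (u : ℝ) : BddBelow (crossingSet F G u) :=
  ⟨max 0 (u - 1), fun _ hs => hs.1⟩

variable {F G : ℝ → C} {u : ℝ}

theorem firstCrossing_eq_of_mem (hmem : max 0 (u - 1) ∈ crossingSet F G u) :
    firstCrossing F G u = max 0 (u - 1) :=
  IsLeast.csInf_eq ⟨hmem, fun _ hs => hs.1⟩

theorem firstCrossing_zero (h : G 0 ≤ F 0) : firstCrossing F G 0 = 0 := by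
  simpa using firstCrossing_eq_of_mem (F := F) (G := G) (u := 0) ⟨le_rfl, by simpa using h⟩

theorem firstCrossing_two (h : G 1 ≤ F 1) : firstCrossing F G 2 = 1 := by
  have hmax : max 0 ((2 : ℝ) - 1) = 1 := by norm_num
  rw [firstCrossing_eq_of_mem, hmax]
  rw [hmax]
  exact ⟨hmax.le, by norm_num [h]⟩

end LE

variable {C : Type*} [Preorder C] {F G : ℝ → C} {u w s : ℝ}

theorem nonempty_crossingSet (hF : Monotone F) (hF1 : IsTop (F 1)) :
    (crossingSet F G u).Nonempty :=
  ⟨max 1 (u - 1), max_le_max_right _ zero_le_one, (hF1 _).trans (hF (le_max_left _ _))⟩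

theorem crossingSet_antitone (hG : Monotone G) : Antitone (crossingSet F G) :=
  fun _ _ huw _ hs =>
    ⟨(max_le_max_left _ (by linarith)).trans hs.1, (hG (by linarith)).trans hs.2⟩

theorem add_sub_mem_crossingSet (hF : Monotone F) (huw : u ≤ w) (hs : s ∈ crossingSet F G u) :
    s + (w - u) ∈ crossingSet F G w := by
  obtain ⟨hs0, hsu⟩ := max_le_iff.1 hs.1
  refine ⟨max_le (by linarith) (by linarith), ?_⟩
  calc
    G (w - (s + (w - u))) = G (u - s) := by ring_nf
    _ ≤ F s := hs.2
    _ ≤ F (s + (w - u)) := hF (by linarith)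

theorem firstCrossing_monotone (hF : Monotone F) (hG : Monotone G) (hF1 : IsTop (F 1)) :
    Monotone (firstCrossing F G) := fun _ _ huw =>
  csInf_le_csInf (bddBelow_crossingSet F G _) (nonempty_crossingSet hF hF1)
    (crossingSet_antitone hG huw)

theorem sub_firstCrossing_monotone (hF : Monotone F) (hF1 : IsTop (F 1)) :
    Monotone fun u => u - firstCrossing F G u := by
  intro u w huw
  have hshift : firstCrossing F G w - (w - u) ≤ firstCrossing F G u :=
    le_csInf (nonempty_crossingSet hF hF1) fun s hs =>
      sub_le_iff_le_add.2 <|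
        csInf_le (bddBelow_crossingSet F G w) (add_sub_mem_crossingSet hF huw hs)
  dsimp only
  linarith

variable [TopologicalSpace C] [OrderClosedTopology C]

theorem isClosed_crossingSet (hF : Continuous F) (hG : Continuous G) :
    IsClosed (crossingSet F G u) :=
  isClosed_Ici.inter (isClosed_le (by fun_prop) hF)

theorem firstCrossing_mem (hF : Continuous F) (hG : Continuous G) (hFm : Monotone F)
    (hF1 : IsTop (F 1)) : firstCrossing F G u ∈ crossingSet F G u :=
  (isClosed_crossingSet hF hG).csInf_mem (nonempty_crossingSet hFm hF1) (bddBelow_crossingSet F G u)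

end Crossing

section LinearOrder

variable {C : Type*} [LinearOrder C]

section OrderClosed

variable [TopologicalSpace C] [OrderClosedTopology C]

theorem apply_firstCrossing_le {F G : ℝ → C} (hF : Continuous F) (hG : Continuous G)
    (hFm : Monotone F) (hF0 : IsBot (F 0)) (hF1 : IsTop (F 1)) (hG1 : IsTop (G 1)) (u : ℝ) :
    F (firstCrossing F G u) ≤ G (u - firstCrossing F G u) := by
  set m := firstCrossing F G u
  have hm : max 0 (u - 1) ≤ m := (firstCrossing_mem hF hG hFm hF1).1
  rcases hm.eq_or_lt with heq | hlt
  · rcases max_choice 0 (u - 1) with hmax | hmax <;> rw [← heq, hmax]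
    · exact hF0 _
    · simpa using hG1 (F (u - 1))
  · have hbefore : Ioo (max 0 (u - 1)) m ⊆ {s | F s ≤ G (u - s)} := fun s hs =>
      (not_le.1 fun hle => notMem_of_lt_csInf hs.2 (bddBelow_crossingSet F G u) ⟨hs.1.le, hle⟩).le
    have hclosure := closure_minimal hbefore (isClosed_le hF (by fun_prop))
    rw [closure_Ioo hlt.ne] at hclosure
    exact hclosure (right_mem_Icc.2 hm)

theorem apply_firstCrossing_eq {F G : ℝ → C} (hF : Continuous F) (hG : Continuous G)
    (hFm : Monotone F) (hF0 : IsBot (F 0)) (hF1 : IsTop (F 1)) (hG1 : IsTop (G 1)) (u : ℝ) :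
    F (firstCrossing F G u) = G (u - firstCrossing F G u) :=
  (apply_firstCrossing_le hF hG hFm hF0 hF1 hG1 u).antisymm (firstCrossing_mem hF hG hFm hF1).2

theorem reparamEquiv_of_continuous_of_monotone_of_surjective {f g : I → C}
    (hf : Continuous f) (hg : Continuous g) (hfm : Monotone f) (hgm : Monotone g)
    (hfs : Surjective f) (hgs : Surjective g) : ReparamEquiv f g := by
  let F : ℝ → C := IccExtend zero_le_one f
  let G : ℝ → C := IccExtend zero_le_one g
  have hFm : Monotone F := hfm.IccExtend _
  have hGm : Monotone G := hgm.IccExtend _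
  have hF0 : IsBot (F 0) := hfs.forall.2 fun t => (IccExtend_left _ f).trans_le (hfm nonneg')
  have hG0 : IsBot (G 0) := hgs.forall.2 fun t => (IccExtend_left _ g).trans_le (hgm nonneg')
  have hF1 : IsTop (F 1) := hfs.forall.2 fun t => (hfm le_one').trans_eq (IccExtend_right _ f).symm
  have hG1 : IsTop (G 1) := hgs.forall.2 fun t => (hgm le_one').trans_eq (IccExtend_right _ g).symm
  have hmono : Monotone (firstCrossing F G) := firstCrossing_monotone hFm hGm hF1
  have hsub : Monotone fun u => u - firstCrossing F G u := sub_firstCrossing_monotone hFm hF1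
  have hcont : Continuous (firstCrossing F G) := continuous_of_monotone_of_monotone_sub hmono hsub
  have hzero : firstCrossing F G 0 = 0 := firstCrossing_zero (hG0 _)
  have htwo : firstCrossing F G 2 = 1 := firstCrossing_two (hF1 _)
  refine ⟨_, _, isReparam_projIcc_comp_two_mul hmono hcont hzero htwo,
    isReparam_projIcc_comp_two_mul hsub (by fun_prop) (by rw [hzero, sub_zero])
      (by norm_num [htwo]),
    funext fun v => ?_⟩
  exact apply_firstCrossing_eq hf.Icc_extend' hg.Icc_extend' hFm hF0 hF1 hG1 (2 * v)

end OrderClosed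

theorem reparamEquiv_of_monotone_of_surjective [DenselyOrdered C] {f g : I → C}
    (hf : Monotone f) (hg : Monotone g) (hfs : Surjective f) (hgs : Surjective g) :
    ReparamEquiv f g := by
  let : TopologicalSpace C := Preorder.topology C
  have : OrderTopology C := ⟨rfl⟩
  exact reparamEquiv_of_continuous_of_monotone_of_surjective (hf.continuous_of_surjective hfs)
    (hg.continuous_of_surjective hgs) hf hg hfs hgs

end LinearOrder

theorem reparamEquiv_of_range_eq {X : Type*} [PartialOrder X] {f g : I → X} (hf : Monotone f)
    (hg : Monotone g) (hfiber : ∀ x, IsClosed (f ⁻¹' {x})) (h : range f = range g) :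
    ReparamEquiv f g := by
  classical
  let : LinearOrder (range f) := hf.isChain_range.linearOrder
  let f' : I → range f := rangeFactorization f
  let g' : I → range f := codRestrict g (range f) fun t => h ▸ mem_range_self t
  have hf' : Monotone f' := fun _ _ hst => hf hst
  have hg' : Monotone g' := fun _ _ hst => hg hst
  have hfs : Surjective f' := rangeFactorization_surjective
  have hgs : Surjective g' := fun ⟨x, hx⟩ => by
    obtain ⟨t, rfl⟩ := h ▸ hx
    exact ⟨t, rfl⟩
  have : DenselyOrdered (range f) :=
    denselyOrdered_of_surjective_of_isClosed_fiber hf' hfs fun x => by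
      simpa [preimage, f', Subtype.ext_iff] using hfiber x
  exact (reparamEquiv_of_monotone_of_surjective hf' hg' hfs hgs).comp_left Subtype.val

theorem reparamEquiv_iff_range_eq_general
    {X : Type*} [TopologicalSpace X] [PartialOrder X] [T1Space X]
    (f g : I → X) (hf : IsDipath f) (hg : Monotone g) :
    ReparamEquiv f g ↔ range f = range g :=
  ⟨ReparamEquiv.range_eq, reparamEquiv_of_range_eq hf.2 hg fun _ =>
    isClosed_singleton.preimage hf.1⟩

/-- In a pospace `X` (Hausdorff, with closed partial order), two dipaths
`f, g` are reparametrization equivalent if and only if they have the same image. -/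
theorem reparamEquiv_iff_range_eq
    {X : Type*} [TopologicalSpace X] [PartialOrder X] [T2Space X] [OrderClosedTopology X]
    (f g : unitInterval → X) (hf : IsDipath f) (hg : IsDipath g) :
    ReparamEquiv f g ↔ Set.range f = Set.range g :=
  reparamEquiv_iff_range_eq_general f g hf hg.2

end
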